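/- arXiv:2304.14069 — 7 statements merged into one kernel-verified Lean document; each statement's English description precedes it below -/
import Mathlib

section
/- Let P be a family assigning to each natural number n a set P_n of n-variable Boolean functions, such that for every injection u : Fin m → Fin n and every m-variable Boolean function f, f ∈ P_m if and only if the n-variable function x ↦ f(x ∘ u) belongs to P_n. Then for every n, the number of non-degenerate n-variable functions in P_n equals the alternating sum over i = 0,…,n of (−1)^{n−i} (n choose i) times the number of i-variable functions in P_i. -/
/-- Monotone increasing in the i-th variable. -/
def MonoIncIn {n : ℕ} (f : (Fin n → Bool) → Bool) (i : Fin n) : Prop :=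
  ∀ x : Fin n → Bool, f (Function.update x i false) ≤ f (Function.update x i true)

/-- Monotone decreasing in the i-th variable. -/
def MonoDecIn {n : ℕ} (f : (Fin n → Bool) → Bool) (i : Fin n) : Prop :=
  ∀ x : Fin n → Bool, f (Function.update x i true) ≤ f (Function.update x i false)

/-- A monotone Boolean function: monotone increasing in every variable. -/
def IsMonotoneBF {n : ℕ} (f : (Fin n → Bool) → Bool) : Prop :=
  ∀ i : Fin n, MonoIncIn f i

/-- A unate Boolean function: for each variable, monotone increasing or decreasing. -/
def IsUnate {n : ℕ} (f : (Fin n → Bool) → Bool) : Prop :=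
  ∀ i : Fin n, MonoIncIn f i ∨ MonoDecIn f i

/-- Non-degenerate in the i-th variable. -/
def NonDegenerateIn {n : ℕ} (f : (Fin n → Bool) → Bool) (i : Fin n) : Prop :=
  ∃ x : Fin n → Bool, f x ≠ f (Function.update x i (! x i))

/-- A non-degenerate Boolean function: non-degenerate in every variable. -/
def NonDegenerate {n : ℕ} (f : (Fin n → Bool) → Bool) : Prop :=
  ∀ i : Fin n, NonDegenerateIn f i

/-- A balanced Boolean function takes the value true exactly 2^(n-1) times. -/
def IsBalanced {n : ℕ} (f : (Fin n → Bool) → Bool) : Prop :=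
  Nat.card {x : Fin n → Bool // f x = true} = 2 ^ (n - 1)

/-- The weight of a Boolean function: number of inputs on which it is true. -/
noncomputable def weightBF {n : ℕ} (f : (Fin n → Bool) → Bool) : ℕ :=
  Nat.card {x : Fin n → Bool // f x = true}

/-- Concatenation f = g || h of two n-variable Boolean functions. -/
def concatBF {n : ℕ} (g h : (Fin n → Bool) → Bool) : (Fin (n + 1) → Bool) → Bool :=
  fun x => if x 0 = true then h (fun i => x i.succ) else g (fun i => x i.succ)

/-- Equivalence under permutation of variables, on the subtype of functions with property P. -/
def varEquiv (n : ℕ) (P : ((Fin n → Bool) → Bool) → Prop) :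
    Setoid {f : (Fin n → Bool) → Bool // P f} where
  r f g := ∃ π : Equiv.Perm (Fin n),
    ∀ x : Fin n → Bool, (g : (Fin n → Bool) → Bool) x = (f : (Fin n → Bool) → Bool) (x ∘ π)
  iseqv := by
    constructor
    · intro f
      exact ⟨Equiv.refl _, fun x => by simp⟩
    · rintro f g ⟨π, h⟩
      refine ⟨π.symm, fun x => ?_⟩
      simpa [Function.comp_def] using (h (x ∘ π.symm)).symm
    · rintro f g k ⟨π1, h1⟩ ⟨π2, h2⟩
      refine ⟨π1.trans π2, fun x => ?_⟩
      rw [h2 x, h1 (x ∘ π2)]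
      rfl

/-- A Boolean function which is degenerate in every variable of `t` does not see the coordinates
in `t`. -/
theorem apply_piecewise_of_not_nonDegenerateIn {n : ℕ} {f : (Fin n → Bool) → Bool}
    {t : Finset (Fin n)} (ht : ∀ i ∈ t, ¬ NonDegenerateIn f i) (x y : Fin n → Bool) :
    f (t.piecewise y x) = f x := by
  induction t using Finset.induction_on with
  | empty => simp
  | insert j s hj ih =>
    rw [← ih fun i hi => ht i (Finset.mem_insert_of_mem hi), Finset.piecewise_insert]
    have hdeg := ht j (Finset.mem_insert_self j s)
    simp only [NonDegenerateIn, not_exists, not_not] at hdeg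
    rcases Bool.eq_or_eq_not (y j) (s.piecewise y x j) with h | h
    · rw [h, Function.update_eq_self]
    · rw [h, ← hdeg]

/-- If `u` is injective and hits exactly the variables outside `t`, then a function is degenerate
in every variable of `t` iff it factors through `u`. -/
theorem forall_not_nonDegenerateIn_iff_exists_comp {m n : ℕ} {u : Fin m → Fin n}
    (hu : Function.Injective u) {t : Finset (Fin n)} (ht : ∀ i, i ∈ Set.range u ↔ i ∉ t)
    (f : (Fin n → Bool) → Bool) :
    (∀ i ∈ t, ¬ NonDegenerateIn f i) ↔
      ∃ g : (Fin m → Bool) → Bool, (fun x => g (x ∘ u)) = f := by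
  constructor
  · intro hf
    refine ⟨fun y => f (Function.extend u y fun _ => false), funext fun x => ?_⟩
    have key : t.piecewise (fun _ => false) x = Function.extend u (x ∘ u) fun _ => false := by
      funext i
      by_cases hi : i ∈ t
      · have hi' : ¬ ∃ a, u a = i := fun h => (ht i).1 h hi
        rw [Finset.piecewise_eq_of_mem _ _ _ hi, Function.extend_apply' _ _ _ hi']
      · obtain ⟨a, rfl⟩ := (ht i).2 hi
        rw [Finset.piecewise_eq_of_notMem _ _ _ hi, hu.extend_apply, Function.comp_apply]
    change f _ = f x
    rw [← key, apply_piecewise_of_not_nonDegenerateIn hf]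
  · rintro ⟨g, rfl⟩ i hi ⟨x, hx⟩
    refine hx (congrArg g (funext fun a => ?_))
    have hne : u a ≠ i := fun h => (ht i).1 ⟨a, h⟩ hi
    simp [hne]

/-- The functions in `P n` that are degenerate in every variable of `t` are equinumerous with
the functions in `P` on the remaining variables. -/
theorem card_forall_not_nonDegenerateIn {P : (n : ℕ) → ((Fin n → Bool) → Bool) → Prop}
    (hP : ∀ (m n : ℕ) (u : Fin m → Fin n), Function.Injective u →
      ∀ f : (Fin m → Bool) → Bool, P m f ↔ P n (fun x => f (x ∘ u)))
    {n : ℕ} (t : Finset (Fin n)) :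
    Nat.card {f : (Fin n → Bool) → Bool // P n f ∧ ∀ i ∈ t, ¬ NonDegenerateIn f i} =
      Nat.card {f : (Fin (n - t.card) → Bool) → Bool // P (n - t.card) f} := by
  have hcard : tᶜ.card = n - t.card := by simp [Finset.card_compl]
  let u : Fin (n - t.card) → Fin n := tᶜ.orderEmbOfFin hcard
  have hu : Function.Injective u := (tᶜ.orderEmbOfFin hcard).injective
  have hrange : ∀ i, i ∈ Set.range u ↔ i ∉ t := fun i => by
    simp [u, Finset.range_orderEmbOfFin]
  have hdeg := forall_not_nonDegenerateIn_iff_exists_comp hu hrange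
  symm
  refine Nat.card_eq_of_bijective
    (fun g => ⟨fun x => g.1 (x ∘ u), (hP _ _ u hu g.1).1 g.2, (hdeg _).2 ⟨g.1, rfl⟩⟩) ⟨?_, ?_⟩
  · intro g g' h
    exact Subtype.ext (hu.surjective_comp_right.injective_comp_right (Subtype.ext_iff.1 h))
  · rintro ⟨f, hf, hft⟩
    obtain ⟨g, rfl⟩ := (hdeg f).1 hft
    exact ⟨⟨g, (hP _ _ u hu g).2 hf⟩, rfl⟩

theorem stmt1 (P : (n : ℕ) → ((Fin n → Bool) → Bool) → Prop)
    (hP : ∀ (m n : ℕ) (u : Fin m → Fin n), Function.Injective u →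
      ∀ f : (Fin m → Bool) → Bool, P m f ↔ P n (fun x => f (x ∘ u)))
    (n : ℕ) :
    (Nat.card {f : (Fin n → Bool) → Bool // P n f ∧ NonDegenerate f} : ℤ)
      = ∑ i ∈ Finset.range (n + 1),
          (-1 : ℤ) ^ (n - i) * n.choose i * Nat.card {f : (Fin i → Bool) → Bool // P i f} := by
  classical
  let S : Fin n → Finset ((Fin n → Bool) → Bool) := fun i => {f | ¬ NonDegenerateIn f i}
  have hleft : (Nat.card {f : (Fin n → Bool) → Bool // P n f ∧ NonDegenerate f} : ℤ) =
      ∑ f ∈ Finset.univ.inf fun i => (S i)ᶜ, if P n f then (1 : ℤ) else 0 := by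
    rw [Finset.sum_boole, Nat.card_eq_fintype_card, Fintype.card_subtype]
    congr 2
    ext f
    rw [Finset.mem_filter_univ]
    simp [Finset.mem_inf, S, NonDegenerate, and_comm]
  have hright (t : Finset (Fin n)) :
      (∑ f ∈ t.inf S, if P n f then (1 : ℤ) else 0) =
        Nat.card {f : (Fin (n - t.card) → Bool) → Bool // P (n - t.card) f} := by
    rw [Finset.sum_boole, ← card_forall_not_nonDegenerateIn hP t, Nat.card_eq_fintype_card,
      Fintype.card_subtype]
    congr 2
    ext f
    simp [Finset.mem_inf, S, and_comm]
  rw [hleft, Finset.inclusion_exclusion_sum_inf_compl]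
  simp_rw [hright]
  rw [Finset.sum_powerset_apply_card fun k =>
    (-1 : ℤ) ^ k • (Nat.card {f : (Fin (n - k) → Bool) → Bool // P (n - k) f} : ℤ),
    Finset.card_univ, Fintype.card_fin, ← Finset.sum_range_reflect]
  refine Finset.sum_congr rfl fun i hi => ?_
  have hin : i ≤ n := Nat.lt_succ_iff.1 (Finset.mem_range.1 hi)
  rw [show n + 1 - 1 - i = n - i by omega, Nat.choose_symm hin, Nat.sub_sub_self hin]
  simp only [nsmul_eq_mul, smul_eq_mul]
  ring
end

section
/- For every n ≥ 0, the number of n-variable non-degenerate unate Boolean functions equals 2^n times the number of n-variable non-degenerate monotone Boolean functions. -/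
/-- Negate the input variables of `f` selected by `s`. -/
def negateInputs {n : ℕ} (s : Fin n → Bool) (f : (Fin n → Bool) → Bool) :
    (Fin n → Bool) → Bool :=
  fun x => f (fun i => xor (s i) (x i))

theorem negateInputs_negateInputs {n : ℕ} (s : Fin n → Bool) (f : (Fin n → Bool) → Bool) :
    negateInputs s (negateInputs s f) = f := by
  funext x
  simp [negateInputs]

theorem negateInputs_update {n : ℕ} (s : Fin n → Bool) (f : (Fin n → Bool) → Bool)
    (x : Fin n → Bool) (i : Fin n) (b : Bool) :
    negateInputs s f (Function.update x i b) =
      f (Function.update (fun j => xor (s j) (x j)) i (xor (s i) b)) := by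
  unfold negateInputs
  congr 1
  funext j
  by_cases h : j = i
  · subst h
    simp
  · simp [h]

theorem NonDegenerate.negateInputs {n : ℕ} {f : (Fin n → Bool) → Bool} (hf : NonDegenerate f)
    (s : Fin n → Bool) : NonDegenerate (negateInputs s f) := by
  intro i
  obtain ⟨x, hx⟩ := hf i
  refine ⟨fun j => xor (s j) (x j), ?_⟩
  rw [negateInputs_update]
  simpa [_root_.negateInputs] using hx

theorem MonoIncIn.negateInputs {n : ℕ} {f : (Fin n → Bool) → Bool} {i : Fin n}
    (hf : MonoIncIn f i) {s : Fin n → Bool} (hs : s i = false) :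
    MonoIncIn (negateInputs s f) i := by
  intro x
  simpa [negateInputs_update, hs] using hf (fun j => xor (s j) (x j))

theorem MonoIncIn.negateInputs_monoDecIn {n : ℕ} {f : (Fin n → Bool) → Bool} {i : Fin n}
    (hf : MonoIncIn f i) {s : Fin n → Bool} (hs : s i = true) :
    MonoDecIn (_root_.negateInputs s f) i := by
  intro x
  simpa [negateInputs_update, hs] using hf (fun j => xor (s j) (x j))

theorem MonoDecIn.negateInputs_monoIncIn {n : ℕ} {f : (Fin n → Bool) → Bool} {i : Fin n}
    (hf : MonoDecIn f i) {s : Fin n → Bool} (hs : s i = true) :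
    MonoIncIn (negateInputs s f) i := by
  intro x
  simpa [negateInputs_update, hs] using hf (fun j => xor (s j) (x j))

theorem NonDegenerateIn.not_monoDecIn {n : ℕ} {f : (Fin n → Bool) → Bool} {i : Fin n}
    (hf : NonDegenerateIn f i) (hinc : MonoIncIn f i) : ¬ MonoDecIn f i := by
  intro hdec
  obtain ⟨x, hx⟩ := hf
  have h := le_antisymm (hinc x) (hdec x)
  have hself := Function.update_eq_self i x
  cases hxi : x i <;> rw [hxi] at hx hself <;> simp_all

theorem IsMonotoneBF.negateInputs_isUnate {n : ℕ} {f : (Fin n → Bool) → Bool}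
    (hf : IsMonotoneBF f) (s : Fin n → Bool) : IsUnate (negateInputs s f) := by
  intro i
  cases hs : s i
  · exact Or.inl ((hf i).negateInputs hs)
  · exact Or.inr ((hf i).negateInputs_monoDecIn hs)

theorem IsUnate.exists_isMonotoneBF_negateInputs {n : ℕ} {f : (Fin n → Bool) → Bool}
    (hf : IsUnate f) : ∃ s : Fin n → Bool, IsMonotoneBF (negateInputs s f) := by
  classical
  refine ⟨fun i => decide (¬ MonoIncIn f i), fun i => ?_⟩
  by_cases h : MonoIncIn f i
  · exact h.negateInputs (by simp [h])
  · exact ((hf i).resolve_left h).negateInputs_monoIncIn (by simp [h])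

/-- The set of negated variables is determined by the result of negating inputs of a
non-degenerate monotone function. -/
theorem IsMonotoneBF.eq_of_negateInputs_eq {n : ℕ} {f g : (Fin n → Bool) → Bool}
    (hf : IsMonotoneBF f) (hg : IsMonotoneBF g) (hnd : NonDegenerate f) {s t : Fin n → Bool}
    (h : negateInputs s f = negateInputs t g) : s = t := by
  funext i
  have hndi := hnd.negateInputs s i
  cases hs : s i <;> cases ht : t i
  · rfl
  · exact absurd (h ▸ (hg i).negateInputs_monoDecIn ht)
      (hndi.not_monoDecIn ((hf i).negateInputs hs))
  · exact absurd ((hf i).negateInputs_monoDecIn hs)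
      (hndi.not_monoDecIn (h ▸ (hg i).negateInputs ht))
  · rfl

theorem stmt2 (n : ℕ) :
    Nat.card {f : (Fin n → Bool) → Bool // IsUnate f ∧ NonDegenerate f}
      = 2 ^ n * Nat.card {f : (Fin n → Bool) → Bool // IsMonotoneBF f ∧ NonDegenerate f} := by
  let negate : (Fin n → Bool) × {f : (Fin n → Bool) → Bool // IsMonotoneBF f ∧ NonDegenerate f} →
      {f : (Fin n → Bool) → Bool // IsUnate f ∧ NonDegenerate f} := fun p =>
    ⟨negateInputs p.1 p.2.1, p.2.2.1.negateInputs_isUnate p.1, p.2.2.2.negateInputs p.1⟩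
  have hbij : Function.Bijective negate := by
    constructor
    · rintro ⟨s, f, hf, hfnd⟩ ⟨t, g, hg, hgnd⟩ h
      have h' : negateInputs s f = negateInputs t g := congrArg Subtype.val h
      obtain rfl := hf.eq_of_negateInputs_eq hg hfnd h'
      have hfg : f = g := by
        rw [← negateInputs_negateInputs s f, h', negateInputs_negateInputs]
      subst hfg
      rfl
    · rintro ⟨g, hg, hgnd⟩
      obtain ⟨s, hs⟩ := hg.exists_isMonotoneBF_negateInputs
      exact ⟨⟨s, negateInputs s g, hs, hgnd.negateInputs s⟩,
        Subtype.ext (negateInputs_negateInputs s g)⟩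
  rw [← Nat.card_eq_of_bijective negate hbij, Nat.card_prod]
  simp
end

section
/- For every n ≥ 0, the number of n-variable non-degenerate balanced unate Boolean functions equals 2^n times the number of n-variable non-degenerate balanced monotone Boolean functions. -/
/-- Translation of the Boolean cube by a fixed vector, an involution. -/
def xorEquiv {n : ℕ} (a : Fin n → Bool) : (Fin n → Bool) ≃ (Fin n → Bool) where
  toFun x := fun i => x i ^^ a i
  invFun x := fun i => x i ^^ a i
  left_inv x := by ext i; simp
  right_inv x := by ext i; simp

theorem xorEquiv_xorEquiv {n : ℕ} (a x : Fin n → Bool) : xorEquiv a (xorEquiv a x) = x :=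
  (xorEquiv a).left_inv x

theorem xorEquiv_update {n : ℕ} (a x : Fin n → Bool) (i : Fin n) (b : Bool) :
    xorEquiv a (Function.update x i b) = Function.update (xorEquiv a x) i (b ^^ a i) := by
  ext j
  by_cases h : j = i
  · subst h; simp [xorEquiv]
  · simp [xorEquiv, h]

theorem comp_xorEquiv_comp_xorEquiv {n : ℕ} (a : Fin n → Bool) (f : (Fin n → Bool) → Bool) :
    (f ∘ xorEquiv a) ∘ xorEquiv a = f := by
  ext x
  simp [xorEquiv_xorEquiv]

theorem monoIncIn_comp_xorEquiv {n : ℕ} (a : Fin n → Bool) (f : (Fin n → Bool) → Bool)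
    (i : Fin n) :
    MonoIncIn (f ∘ xorEquiv a) i ↔ if a i then MonoDecIn f i else MonoIncIn f i := by
  unfold MonoIncIn
  rw [(xorEquiv a).surjective.forall]
  cases h : a i <;> simp [MonoDecIn, xorEquiv_update, xorEquiv_xorEquiv, h]

theorem monoDecIn_comp_xorEquiv {n : ℕ} (a : Fin n → Bool) (f : (Fin n → Bool) → Bool)
    (i : Fin n) :
    MonoDecIn (f ∘ xorEquiv a) i ↔ if a i then MonoIncIn f i else MonoDecIn f i := by
  unfold MonoDecIn
  rw [(xorEquiv a).surjective.forall]
  cases h : a i <;> simp [MonoIncIn, xorEquiv_update, xorEquiv_xorEquiv, h]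

theorem IsBalanced.comp_xorEquiv {n : ℕ} {f : (Fin n → Bool) → Bool} (hf : IsBalanced f)
    (a : Fin n → Bool) : IsBalanced (f ∘ xorEquiv a) :=
  (Nat.card_congr ((xorEquiv a).subtypeEquiv fun _ => Iff.rfl)).trans hf

theorem NonDegenerate.comp_xorEquiv {n : ℕ} {f : (Fin n → Bool) → Bool} (hf : NonDegenerate f)
    (a : Fin n → Bool) : NonDegenerate (f ∘ xorEquiv a) := by
  intro i
  obtain ⟨x, hx⟩ := hf i
  refine ⟨xorEquiv a x, ?_⟩
  simpa [xorEquiv_update, xorEquiv_xorEquiv, show (xorEquiv a x) i = (x i ^^ a i) from rfl]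
    using hx

theorem stmt3 (n : ℕ) :
    Nat.card {f : (Fin n → Bool) → Bool // IsUnate f ∧ IsBalanced f ∧ NonDegenerate f}
      = 2 ^ n * Nat.card {f : (Fin n → Bool) → Bool // IsMonotoneBF f ∧ IsBalanced f ∧ NonDegenerate f} := by
  let φ : (Fin n → Bool) ×
      {f : (Fin n → Bool) → Bool // IsMonotoneBF f ∧ IsBalanced f ∧ NonDegenerate f} →
      {f : (Fin n → Bool) → Bool // IsUnate f ∧ IsBalanced f ∧ NonDegenerate f} := fun p =>
    ⟨p.2.1 ∘ xorEquiv p.1, fun i => by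
      rw [monoIncIn_comp_xorEquiv, monoDecIn_comp_xorEquiv]
      have := p.2.2.1 i
      cases p.1 i <;> simp [this],
      p.2.2.2.1.comp_xorEquiv p.1, p.2.2.2.2.comp_xorEquiv p.1⟩
  have hφ : Function.Bijective φ := by
    constructor
    · rintro ⟨a, f, hf, hfb, hfn⟩ ⟨b, g, hg, hgb, hgn⟩ h
      have h' : f ∘ xorEquiv a = g ∘ xorEquiv b := congrArg Subtype.val h
      have hab : a = b := by
        funext i
        have hnot := (hfn.comp_xorEquiv a i).not_monoDecIn
        have hfi := hf i
        have hgi := hg i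
        have hai := monoIncIn_comp_xorEquiv a f i
        have had := monoDecIn_comp_xorEquiv a f i
        have hbi := monoIncIn_comp_xorEquiv b g i
        have hbd := monoDecIn_comp_xorEquiv b g i
        rw [← h'] at hbi hbd
        cases ha : a i <;> cases hb : b i <;> simp_all
      subst hab
      have hfg : f = g := by
        rw [← comp_xorEquiv_comp_xorEquiv a f, h', comp_xorEquiv_comp_xorEquiv]
      subst hfg
      rfl
    · rintro ⟨f, hf, hfb, hfn⟩
      classical
      let a : Fin n → Bool := fun i => decide (¬ MonoIncIn f i)
      refine ⟨⟨a, f ∘ xorEquiv a, fun i => ?_, hfb.comp_xorEquiv a, hfn.comp_xorEquiv a⟩,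
        Subtype.ext (comp_xorEquiv_comp_xorEquiv a f)⟩
      rw [monoIncIn_comp_xorEquiv]
      have := hf i
      by_cases h : MonoIncIn f i <;> simp_all [a]
  rw [← Nat.card_congr (Equiv.ofBijective φ hφ), Nat.card_prod]
  simp
end

section
/- Let f be an n-variable monotone Boolean function. Then the 2^n translated functions f_α (for α ∈ {0,1}^n), defined by f_α(x) = f(x ⊕ α) with componentwise XOR, are pairwise distinct if and only if f is non-degenerate. -/
/-- A translation-invariant function increasing in a variable moved by the translation does not
depend on that variable. -/
theorem MonoIncIn.eq_of_translate {n : ℕ} {f : (Fin n → Bool) → Bool} {i : Fin n}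
    (hf : MonoIncIn f i) {α β : Fin n → Bool} (hi : α i ≠ β i)
    (h : ∀ x : Fin n → Bool, f (fun j => xor (x j) (α j)) = f (fun j => xor (x j) (β j)))
    (x : Fin n → Bool) :
    f (Function.update x i false) = f (Function.update x i true) := by
  set y : Fin n → Bool := fun j => xor (xor (x j) (α j)) (β j) with hy
  have key : ∀ b : Bool, f (Function.update x i b) = f (Function.update y i (!b)) := by
    intro b
    convert h (fun j => xor (Function.update x i b j) (α j)) using 2
    · funext j
      simp
    · funext j
      by_cases hj : j = i
      · subst hj
        revert hi
        cases α j <;> cases β j <;> simp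
      · simp [hj, hy]
  apply le_antisymm (hf x)
  rw [key true, key false]
  exact hf y

theorem stmt6 {n : ℕ} (f : (Fin n → Bool) → Bool) (hf : IsMonotoneBF f) :
    Function.Injective
        (fun α : Fin n → Bool => (fun x : Fin n → Bool => f (fun i => xor (x i) (α i))))
      ↔ NonDegenerate f := by
  constructor
  · intro hinj i
    by_contra hdeg
    simp only [NonDegenerateIn, not_exists, not_not] at hdeg
    have heq := @hinj (fun _ => false) (Function.update (fun _ => false) i true) (by
      funext x
      simp only [Bool.xor_false]
      rw [hdeg x]
      congr 1
      funext j
      by_cases hj : j = i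
      · subst hj
        simp
      · simp [hj])
    simpa using congrFun heq i
  · intro hnd α β h
    funext i
    by_contra hi
    obtain ⟨x, hx⟩ := hnd i
    have hconst := (hf i).eq_of_translate hi (congrFun h) x
    apply hx
    conv_lhs => rw [← Function.update_eq_self i x]
    cases x i
    · exact hconst
    · exact hconst.symm
end

section
/- Let g and h be n-variable Boolean functions and let f = g||h be their (n+1)-variable concatenation. Then f is unate if and only if g and h are both unate and the following two conditions hold: (1) for each i ∈ {1,…,n}, g and h are either both monotone increasing in the i-th variable or both monotone decreasing in the i-th variable; (2) g ≤ h pointwise or h ≤ g pointwise. -/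
/-- Quantifying over inputs of `n + 1` variables amounts to splitting off the first bit. -/
theorem forall_fin_succ_bool_iff {n : ℕ} {P : (Fin (n + 1) → Bool) → Prop} :
    (∀ x, P x) ↔ (∀ y : Fin n → Bool, P (Fin.cons false y)) ∧ ∀ y, P (Fin.cons true y) := by
  simp [Fin.forall_fin_succ_pi]

@[simp]
theorem concatBF_cons_false {n : ℕ} (g h : (Fin n → Bool) → Bool) (y : Fin n → Bool) :
    concatBF g h (Fin.cons false y) = g y := by
  simp [concatBF]

@[simp]
theorem concatBF_cons_true {n : ℕ} (g h : (Fin n → Bool) → Bool) (y : Fin n → Bool) :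
    concatBF g h (Fin.cons true y) = h y := by
  simp [concatBF]

theorem monoIncIn_concatBF_zero {n : ℕ} (g h : (Fin n → Bool) → Bool) :
    MonoIncIn (concatBF g h) 0 ↔ ∀ x, g x ≤ h x := by
  simp only [MonoIncIn, forall_fin_succ_bool_iff, Fin.update_cons_zero, concatBF_cons_false,
    concatBF_cons_true, and_self]

theorem monoDecIn_concatBF_zero {n : ℕ} (g h : (Fin n → Bool) → Bool) :
    MonoDecIn (concatBF g h) 0 ↔ ∀ x, h x ≤ g x := by
  simp only [MonoDecIn, forall_fin_succ_bool_iff, Fin.update_cons_zero, concatBF_cons_false,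
    concatBF_cons_true, and_self]

theorem monoIncIn_concatBF_succ {n : ℕ} (g h : (Fin n → Bool) → Bool) (i : Fin n) :
    MonoIncIn (concatBF g h) i.succ ↔ MonoIncIn g i ∧ MonoIncIn h i := by
  simp only [MonoIncIn, forall_fin_succ_bool_iff, ← Fin.cons_update, concatBF_cons_false,
    concatBF_cons_true]

theorem monoDecIn_concatBF_succ {n : ℕ} (g h : (Fin n → Bool) → Bool) (i : Fin n) :
    MonoDecIn (concatBF g h) i.succ ↔ MonoDecIn g i ∧ MonoDecIn h i := by
  simp only [MonoDecIn, forall_fin_succ_bool_iff, ← Fin.cons_update, concatBF_cons_false,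
    concatBF_cons_true]

theorem stmt10 {n : ℕ} (g h : (Fin n → Bool) → Bool) :
    IsUnate (concatBF g h)
      ↔ IsUnate g ∧ IsUnate h
          ∧ (∀ i : Fin n, (MonoIncIn g i ∧ MonoIncIn h i) ∨ (MonoDecIn g i ∧ MonoDecIn h i))
          ∧ ((∀ x : Fin n → Bool, g x ≤ h x) ∨ (∀ x : Fin n → Bool, h x ≤ g x)) := by
  rw [IsUnate, Fin.forall_fin_succ]
  simp only [monoIncIn_concatBF_zero, monoDecIn_concatBF_zero, monoIncIn_concatBF_succ,
    monoDecIn_concatBF_succ]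
  exact ⟨fun ⟨hle, hi⟩ => ⟨fun i => (hi i).imp And.left And.left,
    fun i => (hi i).imp And.right And.right, hi, hle⟩, fun ⟨_, _, hi, hle⟩ => ⟨hle, hi⟩⟩
end

section
/- Let P be a family assigning to each natural number n a set P_n of n-variable Boolean functions, such that for every injection u : Fin m → Fin n and every m-variable Boolean function f, f ∈ P_m if and only if the n-variable function x ↦ f(x ∘ u) belongs to P_n. Then for every n, the number of equivalence classes (under permutation of variables) of n-variable functions in P_n equals the sum over i = 0,…,n of the number of equivalence classes of non-degenerate i-variable functions in P_i. -/
/-- Two injections from `α` to a finite type differ by a permutation of the target. -/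
theorem exists_perm_comp_eq {α β : Type*} [Finite β] {u v : α → β}
    (hu : Function.Injective u) (hv : Function.Injective v) :
    ∃ π : Equiv.Perm β, π ∘ u = v := by
  classical
  have := Fintype.ofFinite β
  let e : {b // b ∈ Set.range u} ≃ {b // b ∈ Set.range v} :=
    (Equiv.ofInjective u hu).symm.trans (Equiv.ofInjective v hv)
  refine ⟨e.extendSubtype, funext fun a => ?_⟩
  have h := e.extendSubtype_apply_of_mem (u a) ⟨a, rfl⟩
  have ha : (Equiv.ofInjective u hu).symm ⟨u a, a, rfl⟩ = a :=
    Equiv.ofInjective_symm_apply hu a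
  simpa [e, ha] using h

theorem nonDegenerateIn_comp_apply_iff {m n : ℕ} {u : Fin m → Fin n}
    (hu : Function.Injective u) (f : (Fin m → Bool) → Bool) (i : Fin m) :
    NonDegenerateIn (fun x => f (x ∘ u)) (u i) ↔ NonDegenerateIn f i := by
  constructor
  · rintro ⟨x, hx⟩
    refine ⟨x ∘ u, ?_⟩
    simpa only [Function.update_comp_eq_of_injective x hu, Function.comp_apply] using hx
  · rintro ⟨y, hy⟩
    obtain ⟨x, rfl⟩ := hu.surjective_comp_right y
    refine ⟨x, ?_⟩
    simpa only [Function.update_comp_eq_of_injective x hu, Function.comp_apply] using hy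

/-- The essential variables of a non-degenerate function read along an injection `u`
are the elements of the range of `u`. -/
theorem NonDegenerate.nonDegenerateIn_comp_iff {m n : ℕ} {u : Fin m → Fin n}
    (hu : Function.Injective u) {f : (Fin m → Bool) → Bool} (hf : NonDegenerate f)
    (k : Fin n) : NonDegenerateIn (fun x => f (x ∘ u)) k ↔ k ∈ Set.range u := by
  constructor
  · rintro ⟨x, hx⟩
    by_contra hk
    exact hx (by simp only [Function.update_comp_eq_of_notMem_range x _ hk])
  · rintro ⟨i, rfl⟩
    exact (nonDegenerateIn_comp_apply_iff hu f i).2 (hf i)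

/-- A Boolean function only depends on its essential variables. -/
theorem eq_of_agree_on_nonDegenerateIn {n : ℕ} (f : (Fin n → Bool) → Bool)
    {x y : Fin n → Bool} (h : ∀ k, NonDegenerateIn f k → x k = y k) : f x = f y := by
  suffices H : ∀ (s : Finset (Fin n)) (x : Fin n → Bool),
      (∀ k, NonDegenerateIn f k → x k = y k) → (∀ k ∉ s, x k = y k) → f x = f y from
    H Finset.univ x h (by simp)
  intro s
  induction s using Finset.induction_on with
  | empty => exact fun x _ hx => congrArg f (funext fun k => hx k (by simp))
  | insert a s _ ih =>
    intro x hess hx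
    by_cases hxa : x a = y a
    · refine ih x hess fun k hk => ?_
      by_cases hka : k = a
      · rw [hka, hxa]
      · exact hx k (by simp [hka, hk])
    · have hdeg : ¬ NonDegenerateIn f a := fun ha => hxa (hess a ha)
      have hflip : f x = f (Function.update x a (! x a)) := by
        by_contra hne
        exact hdeg ⟨x, hne⟩
      have hya : (! x a) = y a := by
        cases hx' : x a <;> cases hy' : y a <;> simp_all
      rw [hflip]
      refine ih _ (fun k hk => ?_) (fun k hk => ?_)
      · have hka : k ≠ a := fun hka => hdeg (hka ▸ hk)
        rw [Function.update_of_ne hka]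
        exact hess k hk
      · by_cases hka : k = a
        · subst hka
          rw [Function.update_self, hya]
        · rw [Function.update_of_ne hka]
          exact hx k (by simp [hka, hk])

/-- Every Boolean function is a non-degenerate function of some of its variables. -/
theorem exists_nonDegenerate_comp_eq {n : ℕ} (f : (Fin n → Bool) → Bool) :
    ∃ (m : ℕ) (u : Fin m → Fin n) (g : (Fin m → Bool) → Bool),
      Function.Injective u ∧ NonDegenerate g ∧ f = fun x => g (x ∘ u) := by
  classical
  let s : Finset (Fin n) := Finset.univ.filter (NonDegenerateIn f)
  let u : Fin s.card → Fin n := s.orderEmbOfFin rfl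
  have hu : Function.Injective u := (s.orderEmbOfFin rfl).injective
  have hrange : ∀ k, k ∈ Set.range u ↔ NonDegenerateIn f k := fun k => by
    simp [u, s]
  let g : (Fin s.card → Bool) → Bool := fun y => f (Function.extend u y fun _ => false)
  have hfg : f = fun x => g (x ∘ u) := funext fun x =>
    eq_of_agree_on_nonDegenerateIn f fun k hk => by
      obtain ⟨i, rfl⟩ := (hrange k).2 hk
      rw [hu.extend_apply, Function.comp_apply]
  refine ⟨s.card, u, g, hu, fun i => ?_, hfg⟩
  rw [← nonDegenerateIn_comp_apply_iff hu g i, ← hfg]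
  exact (hrange _).1 ⟨i, rfl⟩

/-- Non-degenerate functions that agree when read along injections `u` and `v`
differ by a bijection of their variables. -/
theorem NonDegenerate.exists_equiv_of_comp_eq {i j n : ℕ} {u : Fin i → Fin n}
    {v : Fin j → Fin n} (hu : Function.Injective u) (hv : Function.Injective v)
    {f : (Fin i → Bool) → Bool} {g : (Fin j → Bool) → Bool}
    (hf : NonDegenerate f) (hg : NonDegenerate g)
    (h : (fun x : Fin n → Bool => g (x ∘ v)) = fun x => f (x ∘ u)) :
    ∃ σ : Fin i ≃ Fin j, ∀ y, g y = f (y ∘ σ) := by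
  have hrange : Set.range u = Set.range v := Set.ext fun k => by
    rw [← hf.nonDegenerateIn_comp_iff hu, ← hg.nonDegenerateIn_comp_iff hv, h]
  let σ : Fin i ≃ Fin j := (Equiv.ofInjective u hu).trans
    ((Equiv.setCongr hrange).trans (Equiv.ofInjective v hv).symm)
  have hσ : v ∘ σ = u := funext fun a => by
    simp [σ, Equiv.apply_ofInjective_symm]
  refine ⟨σ, fun y => ?_⟩
  obtain ⟨x, rfl⟩ := hv.surjective_comp_right y
  simpa only [Function.comp_assoc, hσ] using congrFun h x

/-- Regard an equivalence class of non-degenerate functions in at most `n` variables as an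
equivalence class of `n`-variable functions, by adding dummy variables. -/
def padClass (P : (n : ℕ) → ((Fin n → Bool) → Bool) → Prop)
    (hP : ∀ (m n : ℕ) (u : Fin m → Fin n), Function.Injective u →
      ∀ f : (Fin m → Bool) → Bool, P m f ↔ P n (fun x => f (x ∘ u)))
    (n : ℕ) (c : Σ i : Fin (n + 1),
      Quotient (varEquiv i (fun f => P i f ∧ NonDegenerate f))) :
    Quotient (varEquiv n (P n)) :=
  Quotient.map' (s₁ := varEquiv c.1 (fun f => P c.1 f ∧ NonDegenerate f))
    (s₂ := varEquiv n (P n))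
    (fun f => ⟨fun x => f.1 (x ∘ Fin.castLE c.1.is_le),
      (hP _ _ _ (Fin.castLE_injective c.1.is_le) f.1).1 f.2.1⟩)
    (by
      rintro f g ⟨σ, h⟩
      have hc := Fin.castLE_injective c.1.is_le
      obtain ⟨π, hπ⟩ := exists_perm_comp_eq hc (hc.comp σ.injective)
      refine ⟨π, fun x => ?_⟩
      change g.1 _ = f.1 ((x ∘ π) ∘ _)
      rw [h, Function.comp_assoc, Function.comp_assoc, hπ])
    c.2

theorem padClass_bijective (P : (n : ℕ) → ((Fin n → Bool) → Bool) → Prop)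
    (hP : ∀ (m n : ℕ) (u : Fin m → Fin n), Function.Injective u →
      ∀ f : (Fin m → Bool) → Bool, P m f ↔ P n (fun x => f (x ∘ u)))
    (n : ℕ) : Function.Bijective (padClass P hP n) := by
  constructor
  · rintro ⟨i, ⟨f⟩⟩ ⟨j, ⟨g⟩⟩ h
    obtain ⟨π, hπ⟩ := Quotient.exact h
    obtain ⟨σ, hσ⟩ := f.2.2.exists_equiv_of_comp_eq
      (π.injective.comp (Fin.castLE_injective i.is_le)) (Fin.castLE_injective j.is_le)
      g.2.2 (funext hπ)
    obtain rfl : i = j := Fin.ext (by simpa using Fintype.card_congr σ)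
    exact congrArg (Sigma.mk i) (Quotient.sound ⟨σ, hσ⟩)
  · rintro ⟨f, hf⟩
    obtain ⟨m, u, g, hu, hg, rfl⟩ := exists_nonDegenerate_comp_eq f
    have hmn : m ≤ n := by simpa using Fintype.card_le_of_injective u hu
    refine ⟨⟨⟨m, Nat.lt_succ_of_le hmn⟩,
      Quotient.mk _ ⟨g, (hP _ _ u hu g).2 hf, hg⟩⟩, Quotient.sound ?_⟩
    obtain ⟨π, hπ⟩ := exists_perm_comp_eq (Fin.castLE_injective hmn) hu
    refine ⟨π, fun x => ?_⟩
    change g _ = g ((x ∘ π) ∘ _)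
    rw [Function.comp_assoc, hπ]

theorem stmt14 (P : (n : ℕ) → ((Fin n → Bool) → Bool) → Prop)
    (hP : ∀ (m n : ℕ) (u : Fin m → Fin n), Function.Injective u →
      ∀ f : (Fin m → Bool) → Bool, P m f ↔ P n (fun x => f (x ∘ u)))
    (n : ℕ) :
    Nat.card (Quotient (varEquiv n (P n)))
      = ∑ i ∈ Finset.range (n + 1),
          Nat.card (Quotient (varEquiv i (fun f => P i f ∧ NonDegenerate f))) := by
  rw [← Nat.card_congr (Equiv.ofBijective _ (padClass_bijective P hP n)), Nat.card_sigma,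
    Fin.sum_univ_eq_sum_range
      (fun i => Nat.card (Quotient (varEquiv i (fun f => P i f ∧ NonDegenerate f))))]
end

section
/- The number of 5-variable balanced monotone Boolean functions is 621, and the number of 6-variable balanced monotone Boolean functions is 492288. -/
open Finset

/-! ### Splitting off the first variable -/

/-- A Boolean function of `n + 1` variables is the concatenation of its two restrictions. -/
def concatEquiv (n : ℕ) :
    ((Fin n → Bool) → Bool) × ((Fin n → Bool) → Bool) ≃ ((Fin (n + 1) → Bool) → Bool) where
  toFun p := concatBF p.1 p.2
  invFun f := (fun x => f (Fin.cons false x), fun x => f (Fin.cons true x))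
  left_inv p := by ext x <;> simp [concatBF]
  right_inv f := by
    funext x
    induction x using Fin.consCases with
    | cons b y => cases b <;> simp [concatBF]

theorem concatBF_cons {n : ℕ} (g h : (Fin n → Bool) → Bool) (b : Bool) (x : Fin n → Bool) :
    concatBF g h (Fin.cons b x) = if b = true then h x else g x := by
  simp [concatBF]

theorem concatBF_le_iff {n : ℕ} {g h g' h' : (Fin n → Bool) → Bool} :
    concatBF g h ≤ concatBF g' h' ↔ g ≤ g' ∧ h ≤ h' := by
  constructor
  · intro H
    exact ⟨fun x => by simpa [concatBF_cons] using H (Fin.cons false x),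
      fun x => by simpa [concatBF_cons] using H (Fin.cons true x)⟩
  · rintro ⟨hg, hh⟩ x
    induction x using Fin.consCases with
    | cons b y => cases b <;> simp [concatBF_cons, hg y, hh y]

theorem isMonotoneBF_concatBF {n : ℕ} {g h : (Fin n → Bool) → Bool} :
    IsMonotoneBF (concatBF g h) ↔ IsMonotoneBF g ∧ IsMonotoneBF h ∧ g ≤ h := by
  constructor
  · intro H
    refine ⟨fun i x => ?_, fun i x => ?_, fun x => ?_⟩
    · simpa [← Fin.cons_update, concatBF_cons] using H i.succ (Fin.cons false x)
    · simpa [← Fin.cons_update, concatBF_cons] using H i.succ (Fin.cons true x)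
    · simpa [concatBF_cons] using H 0 (Fin.cons true x)
  · rintro ⟨hg, hh, hle⟩ i x
    induction x using Fin.consCases with
    | cons b y =>
      induction i using Fin.cases with
      | zero => simpa [concatBF_cons] using hle y
      | succ i =>
        cases b
        · simpa [← Fin.cons_update, concatBF_cons] using hg i y
        · simpa [← Fin.cons_update, concatBF_cons] using hh i y

theorem weightBF_eq_sum {n : ℕ} (f : (Fin n → Bool) → Bool) :
    weightBF f = ∑ x, (f x).toNat := by
  rw [weightBF, Nat.card_eq_fintype_card, Fintype.card_subtype, Finset.card_filter]
  refine Finset.sum_congr rfl fun x _ => ?_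
  cases f x <;> rfl

theorem weightBF_concatBF {n : ℕ} (g h : (Fin n → Bool) → Bool) :
    weightBF (concatBF g h) = weightBF g + weightBF h := by
  simp only [weightBF_eq_sum]
  rw [← (Fin.consEquiv fun _ : Fin (n + 1) => Bool).sum_comp, Fintype.sum_prod_type]
  simp [Fin.consEquiv, concatBF_cons, add_comm]

open Classical in
/-- The finite set of monotone Boolean functions of `n` variables. -/
noncomputable def monotoneFns (n : ℕ) : Finset ((Fin n → Bool) → Bool) :=
  {f | IsMonotoneBF f}

open Classical in
theorem sum_monotoneFns_succ {n : ℕ} (F : ((Fin (n + 1) → Bool) → Bool) → ℕ) :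
    ∑ f ∈ monotoneFns (n + 1), F f =
      ∑ g ∈ monotoneFns n, ∑ h ∈ monotoneFns n, if g ≤ h then F (concatBF g h) else 0 := by
  simp only [monotoneFns, Finset.sum_filter]
  rw [← (concatEquiv n).sum_comp, Fintype.sum_prod_type]
  refine Finset.sum_congr rfl fun g _ => ?_
  by_cases hg : IsMonotoneBF g
  · simp [concatEquiv, isMonotoneBF_concatBF, hg, ite_and]
  · simp [concatEquiv, isMonotoneBF_concatBF, hg]

theorem card_monotoneFns_succ_le (n : ℕ) :
    #(monotoneFns (n + 1)) ≤ #(monotoneFns n) ^ 2 := by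
  classical
  rw [Finset.card_eq_sum_ones, sum_monotoneFns_succ]
  calc _ ≤ ∑ g ∈ monotoneFns n, ∑ h ∈ monotoneFns n, 1 := by
        gcongr
        split_ifs <;> simp
    _ = _ := by simp [sq]

open Classical in
/-- The sum over a function of `n + 2` variables, whose restrictions to the first two variables are
`a ≤ b, c ≤ d`, is organised by the interval `[a, d]` which contains `b` and `c` independently. -/
theorem sum_pow_weightBF_add_two (B n : ℕ) :
    ∑ f ∈ monotoneFns (n + 2), B ^ weightBF f =
      ∑ a ∈ monotoneFns n, ∑ d ∈ monotoneFns n, if a ≤ d then B ^ (weightBF a + weightBF d) *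
        (∑ b ∈ monotoneFns n, if a ≤ b ∧ b ≤ d then B ^ weightBF b else 0) ^ 2 else 0 := by
  simp only [sum_monotoneFns_succ, concatBF_le_iff, weightBF_concatBF]
  refine Finset.sum_congr rfl fun a _ => ?_
  have expand : ∀ d, (if a ≤ d then B ^ (weightBF a + weightBF d) *
        (∑ b ∈ monotoneFns n, if a ≤ b ∧ b ≤ d then B ^ weightBF b else 0) ^ 2 else 0) =
      ∑ b ∈ monotoneFns n, ∑ c ∈ monotoneFns n, if a ≤ b ∧ b ≤ d ∧ a ≤ c ∧ c ≤ d then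
        B ^ (weightBF a + weightBF b + (weightBF c + weightBF d)) else 0 := by
    intro d
    by_cases had : a ≤ d
    · rw [if_pos had, sq, Finset.sum_mul_sum, Finset.mul_sum]
      refine Finset.sum_congr rfl fun b _ => ?_
      rw [Finset.mul_sum]
      refine Finset.sum_congr rfl fun c _ => ?_
      by_cases hb : a ≤ b ∧ b ≤ d
      · by_cases hc : a ≤ c ∧ c ≤ d
        · simp [hb, hc]; ring
        · simp [hc]
      · have : ¬ (a ≤ b ∧ b ≤ d ∧ a ≤ c ∧ c ≤ d) := by tauto
        simp [hb, this]
    · rw [if_neg had]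
      refine (Finset.sum_eq_zero fun b _ => Finset.sum_eq_zero fun c _ => if_neg ?_).symm
      exact fun h => had (h.1.trans h.2.1)
  simp only [expand]
  rw [Finset.sum_comm]
  refine Finset.sum_congr rfl fun b _ => ?_
  rw [Finset.sum_comm]
  by_cases hab : a ≤ b
  · simp only [hab, if_true, true_and]
    refine Finset.sum_congr rfl fun c _ => Finset.sum_congr rfl fun d _ => ?_
    simp only [← ite_and]
    congr 1
    exact propext (by tauto)
  · simp [hab]

/-! ### Encoding by truth tables -/

theorem land_two_pow_mul_add {i a c : ℕ} (b d : ℕ) (ha : a < 2 ^ i) (hc : c < 2 ^ i) :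
    (2 ^ i * b + a) &&& (2 ^ i * d + c) = 2 ^ i * (b &&& d) + (a &&& c) := by
  refine Nat.eq_of_testBit_eq fun j => ?_
  rw [Nat.testBit_and, Nat.testBit_two_pow_mul_add _ ha, Nat.testBit_two_pow_mul_add _ hc,
    Nat.testBit_two_pow_mul_add _ (Nat.and_lt_two_pow _ hc)]
  split_ifs <;> simp

theorem two_pow_mul_add_inj {i a b c d : ℕ} (ha : a < 2 ^ i) (hc : c < 2 ^ i) :
    2 ^ i * b + a = 2 ^ i * d + c ↔ b = d ∧ a = c := by
  refine ⟨fun h => ?_, by rintro ⟨rfl, rfl⟩; rfl⟩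
  have hdiv := congrArg (· / 2 ^ i) h
  have hmod := congrArg (· % 2 ^ i) h
  simp only [Nat.mul_add_mod, Nat.mod_eq_of_lt, ha, hc] at hmod
  simp only [Nat.mul_add_div (Nat.two_pow_pos i), Nat.div_eq_of_lt, ha, hc, add_zero] at hdiv
  exact ⟨hdiv, hmod⟩

/-- The truth table of a Boolean function, read as a number with `2 ^ n` binary digits. -/
def truthTable : (n : ℕ) → ((Fin n → Bool) → Bool) → ℕ
  | 0, f => (f Fin.elim0).toNat
  | n + 1, f => 2 ^ 2 ^ n * truthTable n (fun x => f (Fin.cons true x)) +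
      truthTable n (fun x => f (Fin.cons false x))

theorem truthTable_lt : ∀ (n : ℕ) (f : (Fin n → Bool) → Bool), truthTable n f < 2 ^ 2 ^ n
  | 0, f => by simpa [truthTable] using Bool.toNat_lt (f Fin.elim0)
  | n + 1, f => by
    rw [truthTable, pow_succ 2 n, pow_mul, sq]
    have h := truthTable_lt n fun x => f (Fin.cons true x)
    have h' := truthTable_lt n fun x => f (Fin.cons false x)
    nlinarith

theorem truthTable_concatBF {n : ℕ} (g h : (Fin n → Bool) → Bool) :
    truthTable (n + 1) (concatBF g h) = 2 ^ 2 ^ n * truthTable n h + truthTable n g := by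
  simp [truthTable, concatBF_cons]

theorem truthTable_land_eq_iff {n : ℕ} {f g : (Fin n → Bool) → Bool} :
    truthTable n f &&& truthTable n g = truthTable n f ↔ f ≤ g := by
  induction n with
  | zero =>
    have : f ≤ g ↔ f Fin.elim0 ≤ g Fin.elim0 :=
      ⟨fun h => h _, fun h x => by rwa [Subsingleton.elim x Fin.elim0]⟩
    rw [this, truthTable, truthTable]
    cases f Fin.elim0 <;> cases g Fin.elim0 <;> decide
  | succ n ih =>
    obtain ⟨⟨f₀, f₁⟩, rfl⟩ := (concatEquiv n).surjective f
    obtain ⟨⟨g₀, g₁⟩, rfl⟩ := (concatEquiv n).surjective g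
    simp only [concatEquiv, Equiv.coe_fn_mk]
    rw [truthTable_concatBF, truthTable_concatBF,
      land_two_pow_mul_add _ _ (truthTable_lt n _) (truthTable_lt n _),
      two_pow_mul_add_inj (Nat.and_lt_two_pow _ (truthTable_lt n _)) (truthTable_lt n _),
      ih, ih, concatBF_le_iff, and_comm]

/-- Truth tables and weights of all monotone Boolean functions of `n` variables. -/
def monotoneCodes : ℕ → List (ℕ × ℕ)
  | 0 => [(0, 0), (1, 1)]
  | n + 1 => (monotoneCodes n).flatMap fun g =>
      ((monotoneCodes n).filter fun h => g.1 &&& h.1 = g.1).map fun h =>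
        (2 ^ 2 ^ n * h.1 + g.1, g.2 + h.2)

theorem sum_map_flatMap {α β : Type*} (l : List α) (G : α → List β) (F : β → ℕ) :
    ((l.flatMap G).map F).sum = (l.map fun x => ((G x).map F).sum).sum := by
  induction l with
  | nil => rfl
  | cons x l ih => simp [ih]

theorem sum_map_filter {α : Type*} (l : List α) (p : α → Prop) [DecidablePred p] (F : α → ℕ) :
    ((l.filter p).map F).sum = (l.map fun x => if p x then F x else 0).sum := by
  induction l with
  | nil => rfl
  | cons x l ih => by_cases h : p x <;> simp [h, ih]

theorem sum_monotoneFns (n : ℕ) (F : ℕ × ℕ → ℕ) :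
    ∑ f ∈ monotoneFns n, F (truthTable n f, weightBF f) = ((monotoneCodes n).map F).sum := by
  classical
  induction n generalizing F with
  | zero =>
    have huniv : monotoneFns 0 = univ := by
      ext f
      simp [monotoneFns, IsMonotoneBF]
    rw [huniv, ← ((Equiv.funUnique (Fin 0 → Bool) Bool).symm).sum_comp]
    simp [truthTable, monotoneCodes, weightBF_eq_sum, add_comm]
  | succ n ih =>
    rw [sum_monotoneFns_succ, monotoneCodes, sum_map_flatMap]
    simp only [List.map_map, sum_map_filter, Function.comp_def, weightBF_concatBF,
      truthTable_concatBF, ← truthTable_land_eq_iff]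
    rw [← ih]
    exact Finset.sum_congr rfl fun g _ => ih fun h =>
      if truthTable n g &&& h.1 = truthTable n g then
        F (2 ^ 2 ^ n * h.1 + truthTable n g, weightBF g + h.2) else 0

theorem card_monotoneFns (n : ℕ) : #(monotoneFns n) = (monotoneCodes n).length := by
  simpa using sum_monotoneFns n fun _ => 1

theorem sum_pow_weightBF_eq_sum_codes (B n : ℕ) :
    ∑ f ∈ monotoneFns (n + 2), B ^ weightBF f =
      ((monotoneCodes n).map fun a => ((monotoneCodes n).map fun d =>
        if a.1 &&& d.1 = a.1 then B ^ (a.2 + d.2) * (((monotoneCodes n).map fun b =>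
          if a.1 &&& b.1 = a.1 ∧ b.1 &&& d.1 = b.1 then B ^ b.2 else 0).sum) ^ 2
        else 0).sum).sum := by
  classical
  simp only [sum_pow_weightBF_add_two, ← truthTable_land_eq_iff]
  rw [← sum_monotoneFns]
  refine Finset.sum_congr rfl fun a _ => ?_
  rw [← sum_monotoneFns]
  refine Finset.sum_congr rfl fun d _ => ?_
  rw [← sum_monotoneFns]

/-! ### Evaluation

The following definitions are arranged so that the kernel evaluates them quickly: recursors and
primitive operations on `ℕ` are used directly, and intermediate numbers are computed only once. -/

/-- `force n k` is `k n`, but reducing it evaluates `n` first. -/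
noncomputable def force {α : Type} (n : ℕ) (k : ℕ → α) : α :=
  Nat.rec (k 0) (fun m _ => k (m + 1)) n

theorem force_eq {α : Type} (n : ℕ) (k : ℕ → α) : force n k = k n := by
  cases n <;> rfl

/-- `List.map` in continuation-passing style. -/
noncomputable def mapCont {α β γ : Type} (f : α → (β → γ) → γ) (l : List α) :
    (List β → γ) → γ :=
  List.rec (fun k => k []) (fun x _ ih k => f x fun y => ih fun t => k (y :: t)) l

theorem mapCont_eq {α β γ : Type} {f : α → (β → γ) → γ} {g : α → β}
    (h : ∀ x k, f x k = k (g x)) (l : List α) (k : List β → γ) :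
    mapCont f l k = k (l.map g) := by
  induction l generalizing k with
  | nil => rfl
  | cons x l ih => exact (h x _).trans (ih _)

/-- The sum of the values of `F` over a list. -/
noncomputable def listSum {α : Type} (F : α → ℕ) (l : List α) : ℕ :=
  List.rec 0 (fun x _ s => Nat.add (F x) s) l

theorem listSum_eq {α : Type} (F : α → ℕ) (l : List α) : listSum F l = (l.map F).sum := by
  induction l with
  | nil => rfl
  | cons x l ih => rw [List.map_cons, List.sum_cons, ← ih]; rfl

/-- The entries `(c, w)` of `l` for which `p c` holds, each marked by a bit `2 ^ (e * w)` in its own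
block of `k` binary digits. -/
noncomputable def mask (e k : ℕ) (p : ℕ → Bool) (l : List (ℕ × ℕ)) : ℕ :=
  List.rec 0 (fun x _ s => Nat.add (Nat.mul (Nat.pow 2 k) s)
    (Bool.rec 0 (Nat.pow 2 (Nat.mul e x.2)) (p x.1))) l

theorem mask_cons (e k : ℕ) (p : ℕ → Bool) (x : ℕ × ℕ) (l : List (ℕ × ℕ)) :
    mask e k p (x :: l) = 2 ^ k * mask e k p l + if p x.1 then 2 ^ (e * x.2) else 0 := by
  have : (if p x.1 then 2 ^ (e * x.2) else 0) =
      (Bool.rec 0 (Nat.pow 2 (Nat.mul e x.2)) (p x.1) : ℕ) := by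
    cases p x.1 <;> rfl
  rw [this]
  rfl

theorem mask_land_mask {e k : ℕ} (p q : ℕ → Bool) {l : List (ℕ × ℕ)}
    (hl : ∀ x ∈ l, e * x.2 < k) :
    mask e k p l &&& mask e k q l = mask e k (fun c => p c && q c) l := by
  induction l with
  | nil => exact Nat.zero_and 0
  | cons x l ih =>
    have hx : 2 ^ (e * x.2) < 2 ^ k := Nat.pow_lt_pow_right (by norm_num) (hl x (by simp))
    have hbit : ∀ b : Bool, (if b then 2 ^ (e * x.2) else 0) < 2 ^ k := by
      intro b
      cases b
      · simp
      · simpa using hx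
    rw [mask_cons, mask_cons, mask_cons, land_two_pow_mul_add _ _ (hbit _) (hbit _),
      ih fun y hy => hl y (by simp [hy])]
    cases p x.1 <;> cases q x.1 <;> simp

theorem mask_modEq (e k : ℕ) (p : ℕ → Bool) (l : List (ℕ × ℕ)) :
    mask e k p l ≡ (l.map fun x => if p x.1 then 2 ^ (e * x.2) else 0).sum [MOD 2 ^ k - 1] := by
  induction l with
  | nil => rfl
  | cons x l ih =>
    have hk : 2 ^ k ≡ 1 [MOD 2 ^ k - 1] :=
      ((Nat.modEq_iff_dvd' Nat.one_le_two_pow).2 dvd_rfl).symm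
    rw [mask_cons, List.map_cons, List.sum_cons, add_comm]
    simpa using (hk.mul ih).add_left _

theorem mask_mod {e m : ℕ} (p : ℕ → Bool) {l : List (ℕ × ℕ)} (hw : ∀ x ∈ l, x.2 ≤ m)
    (hl : l.length + 1 < 2 ^ e) :
    mask e (e * (m + 1)) p l % (2 ^ (e * (m + 1)) - 1) =
      (l.map fun x => if p x.1 then 2 ^ (e * x.2) else 0).sum := by
  have hle : (l.map fun x => if p x.1 then 2 ^ (e * x.2) else 0).sum ≤
      l.length * 2 ^ (e * m) := by
    have := List.sum_le_card_nsmul (l.map fun x => if p x.1 then 2 ^ (e * x.2) else 0)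
      (2 ^ (e * m)) (by
        simp only [List.mem_map]
        rintro _ ⟨x, hx, rfl⟩
        split_ifs
        · exact Nat.pow_le_pow_right (by norm_num) (Nat.mul_le_mul_left _ (hw x hx))
        · exact Nat.zero_le _)
    simpa using this
  have hlt : (l.length + 1) * 2 ^ (e * m) < 2 ^ (e * (m + 1)) := by
    rw [mul_add_one, pow_add, mul_comm (2 ^ (e * m))]
    exact Nat.mul_lt_mul_of_pos_right hl (by positivity)
  have hpos : 0 < 2 ^ (e * m) := by positivity
  rw [mask_modEq, Nat.mod_eq_of_lt]
  rw [add_one_mul] at hlt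
  omega

/-- The weight enumerator, at `2 ^ e`, of the functions of `n + 2` variables, computed from the list
`l` of codes of the functions of `n` variables, all of which have weight at most `m`. -/
noncomputable def weightEnum (e m : ℕ) (l : List (ℕ × ℕ)) : ℕ :=
  mapCont (fun x k => force x.1 fun c => force x.2 fun w => k (c, w)) l fun l =>
  mapCont (fun x k => force (mask e (e * (m + 1)) (fun b => Nat.beq (Nat.land b x.1) b) l)
    fun v => k (x, v)) l fun t =>
  listSum (fun a : ℕ × ℕ =>
    force (mask e (e * (m + 1)) (fun b => Nat.beq (Nat.land a.1 b) a.1) l) fun u =>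
    listSum (fun d : (ℕ × ℕ) × ℕ =>
      Bool.rec 0
        (Nat.mul (Nat.pow 2 (Nat.mul e (Nat.add a.2 d.1.2)))
          (Nat.pow (Nat.mod (Nat.land u d.2) (Nat.sub (Nat.pow 2 (Nat.mul e (Nat.succ m))) 1)) 2))
        (Nat.beq (Nat.land a.1 d.1.1) a.1)) t) l

theorem weightEnum_eq {e m : ℕ} {l : List (ℕ × ℕ)} (he : 0 < e) (hw : ∀ x ∈ l, x.2 ≤ m)
    (hl : l.length + 1 < 2 ^ e) :
    weightEnum e m l = (l.map fun a => (l.map fun d =>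
      if a.1 &&& d.1 = a.1 then (2 ^ e) ^ (a.2 + d.2) * ((l.map fun b =>
        if a.1 &&& b.1 = a.1 ∧ b.1 &&& d.1 = b.1 then (2 ^ e) ^ b.2 else 0).sum) ^ 2
      else 0).sum).sum := by
  rw [weightEnum, mapCont_eq (g := id) fun x k => by rw [force_eq, force_eq]; rfl, List.map_id,
    mapCont_eq
      (g := fun x => (x, mask e (e * (m + 1)) (fun b => Nat.beq (Nat.land b x.1) b) l))
      fun x k => force_eq _ _, listSum_eq]
  congr 1
  refine List.map_congr_left fun a _ => ?_
  rw [force_eq, listSum_eq, List.map_map]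
  congr 1
  refine List.map_congr_left fun d _ => ?_
  have hk : ∀ x ∈ l, e * x.2 < e * (m + 1) := fun x hx =>
    Nat.mul_lt_mul_of_pos_left (Nat.lt_succ_of_le (hw x hx)) he
  have key := mask_mod (fun b => Nat.beq (Nat.land a.1 b) a.1 && Nat.beq (Nat.land b d.1) b) hw hl
  rw [← mask_land_mask _ _ hk] at key
  have hcond : ∀ x y : ℕ, (Nat.beq x y = true) = (x = y) := fun x y => by simp
  simp only [Bool.and_eq_true, hcond] at key
  by_cases had : a.1 &&& d.1 = a.1
  · have hb : Nat.beq (Nat.land a.1 d.1) a.1 = true := by rw [hcond]; exact had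
    simp only [if_pos had, Function.comp_apply, hb, ← pow_mul]
    exact congrArg (fun s => 2 ^ (e * (a.2 + d.2)) * s ^ 2) key
  · have hb : Nat.beq (Nat.land a.1 d.1) a.1 = false := by
      rw [← Bool.not_eq_true, hcond]; exact had
    rw [if_neg had, Function.comp_apply, hb]

theorem sum_pow_div_mod {α : Type*} (s : Finset α) (w : α → ℕ) {B : ℕ} (hs : #s < B) (t : ℕ) :
    (∑ x ∈ s, B ^ w x) / B ^ t % B = #{x ∈ s | w x = t} := by
  have hB : 0 < B := by omega
  have hlow : ∑ x ∈ s with w x < t, B ^ w x < B ^ t := by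
    rcases t with _ | t
    · simp
    calc ∑ x ∈ s with w x < t + 1, B ^ w x ≤ ∑ x ∈ s with w x < t + 1, B ^ t :=
          Finset.sum_le_sum fun x hx => Nat.pow_le_pow_right hB
            (Nat.lt_succ_iff.1 (Finset.mem_filter.1 hx).2)
      _ ≤ #s * B ^ t := by
          rw [Finset.sum_const, smul_eq_mul]
          exact Nat.mul_le_mul_right _ (Finset.card_filter_le _ _)
      _ < B ^ (t + 1) := by
          rw [pow_succ']
          exact Nat.mul_lt_mul_of_pos_right hs (by positivity)
  have hhigh : B ^ (t + 1) ∣ ∑ x ∈ s with ¬ w x < t ∧ w x ≠ t, B ^ w x :=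
    Finset.dvd_sum fun x hx => pow_dvd_pow _ (by
      have := (Finset.mem_filter.1 hx).2
      omega)
  obtain ⟨q, hq⟩ := hhigh
  have hmid : ∑ x ∈ s with ¬ w x < t ∧ w x = t, B ^ w x = #{x ∈ s | w x = t} * B ^ t := by
    rw [← smul_eq_mul, ← Finset.sum_const]
    refine Finset.sum_congr (Finset.filter_congr fun x _ => by omega) fun x hx => ?_
    rw [(Finset.mem_filter.1 hx).2]
  have hsum : ∑ x ∈ s, B ^ w x =
      ∑ x ∈ s with w x < t, B ^ w x + B ^ t * (#{x ∈ s | w x = t} + B * q) := by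
    rw [← Finset.sum_filter_add_sum_filter_not s (fun x => w x < t),
      ← Finset.sum_filter_add_sum_filter_not {x ∈ s | ¬ w x < t} (fun x => w x = t),
      Finset.filter_filter, Finset.filter_filter, hmid, hq]
    ring
  rw [hsum, Nat.add_mul_div_left _ _ (by positivity), Nat.div_eq_of_lt hlow, zero_add,
    Nat.add_mul_mod_self_left, Nat.mod_eq_of_lt ((Finset.card_filter_le _ _).trans_lt hs)]

theorem card_monotone_balanced {n e m : ℕ} (he : 0 < e)
    (hw : ∀ x ∈ monotoneCodes n, x.2 ≤ m) (hl : (monotoneCodes n).length ^ 4 + 1 < 2 ^ e) :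
    Nat.card {f : (Fin (n + 2) → Bool) → Bool // IsMonotoneBF f ∧ IsBalanced f} =
      weightEnum e m (monotoneCodes n) / (2 ^ e) ^ 2 ^ (n + 1) % 2 ^ e := by
  classical
  have hcard : #(monotoneFns (n + 2)) ≤ (monotoneCodes n).length ^ 4 :=
    calc #(monotoneFns (n + 2)) ≤ (#(monotoneFns n) ^ 2) ^ 2 :=
          (card_monotoneFns_succ_le _).trans (Nat.pow_le_pow_left (card_monotoneFns_succ_le n) 2)
      _ = _ := by rw [card_monotoneFns, ← pow_mul]
  have hlen : (monotoneCodes n).length ≤ (monotoneCodes n).length ^ 4 :=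
    Nat.le_self_pow (by norm_num) _
  rw [weightEnum_eq he hw (by omega), ← sum_pow_weightBF_eq_sum_codes,
    sum_pow_div_mod _ _ (by omega), Nat.card_eq_fintype_card, Fintype.card_subtype, monotoneFns,
    Finset.filter_filter]
  congr 1
  ext f
  rw [Finset.mem_filter, Finset.mem_filter]
  rfl

theorem stmt18 :
    Nat.card {f : (Fin 5 → Bool) → Bool // IsMonotoneBF f ∧ IsBalanced f} = 621
      ∧ Nat.card {f : (Fin 6 → Bool) → Bool // IsMonotoneBF f ∧ IsBalanced f} = 492288 := by
  constructor
  · rw [card_monotone_balanced (n := 3) (e := 30) (m := 8) (by norm_num) (by decide +kernel)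
      (by decide +kernel)]
    decide +kernel
  · rw [card_monotone_balanced (n := 4) (e := 30) (m := 16) (by norm_num) (by decide +kernel)
      (by decide +kernel)]
    decide +kernel
end
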